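/- In the setting below, let δ ∈ (0, ν) and let C be a maximal chain of X_δ with x in the closure of C. Then ∂(⋃_{q∈C} Ŝ_q) ∩ B_ν(x) ⊆ W^s_ε(x), where ∂ denotes the topological frontier in M. -/

import Mathlib

open Metric Set

variable {M : Type*} [MetricSpace M]

/-- Iterates of a homeomorphism, indexed by `ℤ`. -/
def iterZ (f : M ≃ₜ M) (k : ℤ) (x : M) : M := (f.toEquiv ^ k) x

/-- `f` is expansive with expansivity constant `α`. -/
def IsExpansive (f : M ≃ₜ M) (α : ℝ) : Prop :=
  ∀ x y : M, x ≠ y → ∃ k : ℤ, α < dist (iterZ f k x) (iterZ f k y)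

/-- Stable set of `x`. -/
def Ws (f : M ≃ₜ M) (x : M) : Set M :=
  {y | Filter.Tendsto (fun k : ℤ => dist (iterZ f k x) (iterZ f k y)) Filter.atTop (nhds 0)}

/-- Unstable set of `x`. -/
def Wu (f : M ≃ₜ M) (x : M) : Set M :=
  {y | Filter.Tendsto (fun k : ℤ => dist (iterZ f k x) (iterZ f k y)) Filter.atBot (nhds 0)}

/-- Local (`ε`-local) stable set of `x`. -/
def WsLoc (f : M ≃ₜ M) (ε : ℝ) (x : M) : Set M :=
  {y | ∀ k : ℤ, 0 ≤ k → dist (iterZ f k x) (iterZ f k y) ≤ ε}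

/-- Local (`ε`-local) unstable set of `x`. -/
def WuLoc (f : M ≃ₜ M) (ε : ℝ) (x : M) : Set M :=
  {y | ∀ k : ℤ, k ≤ 0 → dist (iterZ f k x) (iterZ f k y) ≤ ε}

/-- The model space `ℝ^r × ℝ^{n-r}`. -/
abbrev ModelSp (n r : ℕ) := (Fin r → ℝ) × (Fin (n - r) → ℝ)

/-- The model hyperbolic linear map `L(a,b) = (a/2, 2b)`. -/
noncomputable def modelL (n r : ℕ) : ModelSp n r → ModelSp n r :=
  fun q => (fun i => q.1 i / 2, fun i => 2 * q.2 i)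

/-- Topologically hyperbolic periodic points of index `r` (`Per_H^r`). -/
def PerHr (f : M ≃ₜ M) (n r : ℕ) : Set M :=
  {p | ∃ l : ℕ, 1 ≤ l ∧ (f.toEquiv ^ l) p = p ∧
    ∃ (U : Set M) (V : Set (ModelSp n r)) (h : U ≃ₜ V),
      IsOpen U ∧ IsOpen V ∧ (0 : ModelSp n r) ∈ V ∧
      ∃ hp : p ∈ U, ((h ⟨p, hp⟩ : V) : ModelSp n r) = 0 ∧
        ∀ z : M, ∀ hz : z ∈ U, ∀ hz' : (f.toEquiv ^ l) z ∈ U,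
          ((h ⟨(f.toEquiv ^ l) z, hz'⟩ : V) : ModelSp n r) = modelL n r (h ⟨z, hz⟩)}

/-- All topologically hyperbolic periodic points (`Per_H`). -/
def PerH (f : M ≃ₜ M) (n : ℕ) : Set M := ⋃ r ∈ Finset.range (n + 1), PerHr f n r

/-- `p` admits a local product structure. -/
def AdmitsLPS (f : M ≃ₜ M) (n : ℕ) (p : M) : Prop :=
  ∃ (k : ℕ) (h : (Fin k → ℝ) × (Fin (n - k) → ℝ) → M) (ε : ℝ),
    0 < ε ∧ Topology.IsEmbedding h ∧ p ∈ Set.range h ∧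
    ∀ x : Fin k → ℝ, ∀ y : Fin (n - k) → ℝ,
      h '' ({x} ×ˢ univ) = WsLoc f ε (h (x, y)) ∩ Set.range h ∧
      h '' (univ ×ˢ {y}) = WuLoc f ε (h (x, y)) ∩ Set.range h

/-- `D` has exactly two connected components, namely `V₁` and `V₂`. -/
def TwoComponents {M : Type*} [TopologicalSpace M] (D V₁ V₂ : Set M) : Prop :=
  V₁ ≠ V₂ ∧
  (∀ y ∈ D, connectedComponentIn D y = V₁ ∨ connectedComponentIn D y = V₂) ∧
  (∃ y ∈ D, connectedComponentIn D y = V₁) ∧ (∃ y ∈ D, connectedComponentIn D y = V₂)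

variable {M : Type*} [MetricSpace M]

/-- `S_p = cc_p(W^s(p) ∩ B_ν(x))`. -/
def SpSet (f : M ≃ₜ M) (x : M) (ν : ℝ) (p : M) : Set M :=
  connectedComponentIn (Ws f p ∩ Metric.ball x ν) p

/-- `U_p = cc_p(W^u(p) ∩ B_ν(x))`. -/
def UpSet (f : M ≃ₜ M) (x : M) (ν : ℝ) (p : M) : Set M :=
  connectedComponentIn (Wu f p ∩ Metric.ball x ν) p

/-- `Ŝ_p = B_ν(x) \ cc_x(B_ν(x) \ S_p)`. -/
def ShatSet (f : M ≃ₜ M) (x : M) (ν : ℝ) (p : M) : Set M :=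
  Metric.ball x ν \ connectedComponentIn (Metric.ball x ν \ SpSet f x ν p) x

/-- `X_δ = Per_H^{n-1} ∩ B_δ(x)`. -/
def Xdelta (f : M ≃ₜ M) (n : ℕ) (x : M) (δ : ℝ) : Set M :=
  PerHr f n (n - 1) ∩ Metric.ball x δ

/-- `C` is a chain of `(X_δ, ≤)`, where `p ≤ q ↔ Ŝ_p ⊆ Ŝ_q`. -/
def IsChainIn (f : M ≃ₜ M) (n : ℕ) (x : M) (ν δ : ℝ) (C : Set M) : Prop :=
  C ⊆ Xdelta f n x δ ∧
  ∀ p ∈ C, ∀ q ∈ C, ShatSet f x ν p ⊆ ShatSet f x ν q ∨ ShatSet f x ν q ⊆ ShatSet f x ν p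

/-- `C` is a maximal chain of `(X_δ, ≤)`. -/
def IsMaxChainIn (f : M ≃ₜ M) (n : ℕ) (x : M) (ν δ : ℝ) (C : Set M) : Prop :=
  IsChainIn f n x ν δ C ∧ ∀ C' : Set M, IsChainIn f n x ν δ C' → C ⊆ C' → C' = C

/-!
By expansivity `W^s_ε(q) ⊆ W^s(q)`, so `S_q` is closed in the ball and the component of `x` in
its complement is open. Hence the points of `C` close to `x` lie outside any given umbrella
`Ŝ_{q₀}`, and by totality of the chain they carry larger umbrellas. Let `z ∈ B_ν(x)` be a
frontier point of the union and `N` a small connected neighbourhood of `z`. Then `N` meets some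
`Ŝ_{q₀}` and is not contained in the union, so for `q ∈ C` close enough to `x` it meets both
`Ŝ_q` and its complement, hence it meets `S_q ⊆ W^s_ε(q)`. Thus `(x, z)` is a limit of pairs
`(q, y)` with `y ∈ W^s_ε(q)`, and this is a closed relation.
-/

open Filter Topology

section Umbrella

variable {X : Type*} [TopologicalSpace X]

/-- The umbrella of `S` in `B` seen from `x`: the part of `B` that cannot be joined to `x` within
`B \ S`. It is all of `B` when `x ∉ B \ S`, since `connectedComponentIn` is then empty. The set
`Ŝ_p` is the case where `B` is the ball around `x` and `S` is the plaque `S_p`. -/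
def umbrella (B S : Set X) (x : X) : Set X :=
  B \ connectedComponentIn (B \ S) x

theorem closure_connectedComponentIn_inter_subset (F : Set X) (p : X) :
    closure (connectedComponentIn F p) ∩ F ⊆ connectedComponentIn F p := by
  by_cases hp : p ∈ F
  · have hsub : connectedComponentIn F p ⊆ closure (connectedComponentIn F p) ∩ F :=
      subset_inter subset_closure (connectedComponentIn_subset F p)
    exact (isPreconnected_connectedComponentIn.subset_closure hsub
      inter_subset_left).subset_connectedComponentIn (hsub (mem_connectedComponentIn hp))
      inter_subset_right
  · simp only [connectedComponentIn_eq_empty hp, closure_empty, empty_inter, subset_rfl]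

theorem inter_subset_umbrella (B S : Set X) (x : X) : B ∩ S ⊆ umbrella B S x :=
  fun _ hy => ⟨hy.1, fun h => (connectedComponentIn_subset _ _ h).2 hy.2⟩

theorem umbrella_eq_of_notMem {B S : Set X} {x : X} (hx : x ∉ B \ S) : umbrella B S x = B := by
  rw [umbrella, connectedComponentIn_eq_empty hx, sdiff_empty]

theorem compl_umbrella_mem_nhds [LocallyConnectedSpace X] {B S : Set X} {x : X}
    (h : B \ S ∈ 𝓝 x) : (umbrella B S x)ᶜ ∈ 𝓝 x :=
  mem_of_superset (connectedComponentIn_mem_nhds h) fun _ hy hyu => hyu.2 hy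

theorem inter_nonempty_of_umbrella {B S N : Set X} {x : X} (hN : IsPreconnected N) (hNB : N ⊆ B)
    (hin : (N ∩ umbrella B S x).Nonempty) (hout : (N \ umbrella B S x).Nonempty) :
    (N ∩ S).Nonempty := by
  obtain ⟨u, huN, hu⟩ := hin
  obtain ⟨v, hvN, hv⟩ := hout
  by_contra hNS
  have hsub : N ⊆ B \ S := fun y hy => ⟨hNB hy, fun hyS => hNS ⟨y, hy, hyS⟩⟩
  have hvx : v ∈ connectedComponentIn (B \ S) x := by
    by_contra h
    exact hv ⟨hNB hvN, h⟩
  have huv : u ∈ connectedComponentIn (B \ S) v := hN.subset_connectedComponentIn hvN hsub huN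
  exact hu.2 (connectedComponentIn_eq hvx ▸ huv)

variable {B C : Set X} {S : X → Set X} {x z : X}

theorem mem_sdiff_of_mem_frontier_biUnion_umbrella (hB : IsOpen B) (hzB : z ∈ B)
    (hz : z ∈ frontier (⋃ q ∈ C, umbrella B (S q) x)) {q : X} (hq : q ∈ C) : x ∈ B \ S q := by
  by_contra hx
  have hBsub : B ⊆ ⋃ q ∈ C, umbrella B (S q) x :=
    (umbrella_eq_of_notMem hx).superset.trans
      (subset_biUnion_of_mem (u := fun q => umbrella B (S q) x) hq)
  exact hz.2 (interior_maximal hBsub hB hzB)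

theorem frequently_umbrella_subset [LocallyConnectedSpace X] (hCB : C ⊆ B)
    (hself : ∀ q ∈ C, q ∈ S q)
    (hchain : ∀ p ∈ C, ∀ q ∈ C,
      umbrella B (S p) x ⊆ umbrella B (S q) x ∨ umbrella B (S q) x ⊆ umbrella B (S p) x)
    (hxC : x ∈ closure C) {q₀ : X} (hq₀ : q₀ ∈ C) (hx : B \ S q₀ ∈ 𝓝 x) :
    ∃ᶠ q in 𝓝 x, q ∈ C ∧ umbrella B (S q₀) x ⊆ umbrella B (S q) x := by
  refine ((mem_closure_iff_frequently.1 hxC).and_eventually (compl_umbrella_mem_nhds hx)).mono ?_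
  rintro q ⟨hq, hqout⟩
  have hqin : q ∈ umbrella B (S q) x := inter_subset_umbrella _ _ _ ⟨hCB hq, hself q hq⟩
  exact ⟨hq, (hchain q₀ hq₀ q hq).resolve_right fun h => hqout (h hqin)⟩

theorem mk_mem_closure_of_mem_frontier_biUnion_umbrella [LocallyConnectedSpace X] (hB : IsOpen B)
    (hCB : C ⊆ B) (hself : ∀ q ∈ C, q ∈ S q) (hopen : ∀ q ∈ C, IsOpen (B \ S q))
    (hchain : ∀ p ∈ C, ∀ q ∈ C,
      umbrella B (S p) x ⊆ umbrella B (S q) x ∨ umbrella B (S q) x ⊆ umbrella B (S p) x)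
    (hxC : x ∈ closure C) (hzB : z ∈ B) (hz : z ∈ frontier (⋃ q ∈ C, umbrella B (S q) x)) :
    (x, z) ∈ closure {w : X × X | w.1 ∈ C ∧ w.2 ∈ S w.1} := by
  refine mem_closure_iff_nhds.2 fun T hT => ?_
  obtain ⟨W, hW, N, hN, hWN⟩ := mem_nhds_prod_iff.1 hT
  set N' := connectedComponentIn (N ∩ B) z
  have hN'sub : N' ⊆ N ∩ B := connectedComponentIn_subset _ _
  have hN'z : N' ∈ 𝓝 z := connectedComponentIn_mem_nhds (inter_mem hN (hB.mem_nhds hzB))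
  obtain ⟨u, huN, hu⟩ := mem_closure_iff_nhds.1 hz.1 N' hN'z
  obtain ⟨q₀, hq₀, huq₀⟩ := mem_iUnion₂.1 hu
  obtain ⟨v, hvN, hv⟩ : ∃ v ∈ N', v ∉ ⋃ q ∈ C, umbrella B (S q) x :=
    not_subset.1 fun h => hz.2 (mem_interior_iff_mem_nhds.2 (mem_of_superset hN'z h))
  have hx : B \ S q₀ ∈ 𝓝 x :=
    (hopen q₀ hq₀).mem_nhds (mem_sdiff_of_mem_frontier_biUnion_umbrella hB hzB hz hq₀)
  obtain ⟨q, ⟨hq, hle⟩, hqW⟩ :=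
    ((frequently_umbrella_subset hCB hself hchain hxC hq₀ hx).and_eventually hW).exists
  obtain ⟨y, hyN, hyS⟩ : (N' ∩ S q).Nonempty :=
    inter_nonempty_of_umbrella isPreconnected_connectedComponentIn
      (hN'sub.trans inter_subset_right) ⟨u, huN, hle huq₀⟩
      ⟨v, hvN, fun h => hv (mem_biUnion hq h)⟩
  exact ⟨(q, y), hWN ⟨hqW, (hN'sub hyN).1⟩, hq, hyS⟩

end Umbrella

section LocalStableSets

theorem homeomorph_toEquiv_zpow {X : Type*} [TopologicalSpace X] (f : X ≃ₜ X) (k : ℤ) :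
    (f ^ k).toEquiv = f.toEquiv ^ k :=
  map_zpow (MonoidHom.mk' Homeomorph.toEquiv fun _ _ => rfl) f k

theorem continuous_iterZ (f : M ≃ₜ M) (k : ℤ) : Continuous (iterZ f k) := by
  have h : iterZ f k = ⇑(f ^ k) := by
    funext y
    rw [iterZ, ← homeomorph_toEquiv_zpow, Homeomorph.coe_toEquiv]
  exact h ▸ (f ^ k).continuous

theorem iterZ_add (f : M ≃ₜ M) (m k : ℤ) (x : M) :
    iterZ f (m + k) x = iterZ f m (iterZ f k x) := by
  simp only [iterZ, zpow_add, Equiv.Perm.mul_apply]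

theorem IsExpansive.eq_of_forall_dist_le {f : M ≃ₜ M} {α : ℝ} (hexp : IsExpansive f α) {x y : M}
    (h : ∀ k, dist (iterZ f k x) (iterZ f k y) ≤ α) : x = y := by
  by_contra hxy
  obtain ⟨k, hk⟩ := hexp x y hxy
  exact (h k).not_gt hk

theorem mem_Ws_self (f : M ≃ₜ M) (p : M) : p ∈ Ws f p := by
  simp only [Ws, mem_ofPred_eq, dist_self, tendsto_const_nhds]

theorem isClosed_setOfPred_mem_WsLoc (f : M ≃ₜ M) (ε : ℝ) :
    IsClosed {w : M × M | w.2 ∈ WsLoc f ε w.1} := by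
  have heq : {w : M × M | w.2 ∈ WsLoc f ε w.1} =
      ⋂ k : ℤ, ⋂ _ : 0 ≤ k, {w | dist (iterZ f k w.1) (iterZ f k w.2) ≤ ε} := by
    ext w
    simp only [WsLoc, mem_ofPred_eq, mem_iInter]
  exact heq ▸ isClosed_iInter fun k => isClosed_iInter fun _ =>
    isClosed_le (((continuous_iterZ f k).comp continuous_fst).dist
      ((continuous_iterZ f k).comp continuous_snd)) continuous_const

theorem isClosed_WsLoc (f : M ≃ₜ M) (ε : ℝ) (p : M) : IsClosed (WsLoc f ε p) :=
  (isClosed_setOfPred_mem_WsLoc f ε).preimage (Continuous.prodMk_right p)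

theorem dist_iterZ_le_of_tendsto_of_mem_WsLoc {f : M ≃ₜ M} {ε : ℝ} {p y a b : M} {l : Filter ℤ}
    [l.NeBot] (hl : l ≤ atTop) (hy : y ∈ WsLoc f ε p) (ha : Tendsto (iterZ f · p) l (𝓝 a))
    (hb : Tendsto (iterZ f · y) l (𝓝 b)) (m : ℤ) : dist (iterZ f m a) (iterZ f m b) ≤ ε := by
  have hlim : Tendsto (fun k => dist (iterZ f m (iterZ f k p)) (iterZ f m (iterZ f k y))) l
      (𝓝 (dist (iterZ f m a) (iterZ f m b))) :=
    (((continuous_iterZ f m).tendsto a).comp ha).dist (((continuous_iterZ f m).tendsto b).comp hb)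
  refine le_of_tendsto hlim ?_
  filter_upwards [hl (eventually_ge_atTop (-m))] with k hk
  simpa only [iterZ_add] using hy (m + k) (neg_le_iff_add_nonneg'.1 hk)

theorem IsExpansive.WsLoc_subset_Ws [CompactSpace M] {f : M ≃ₜ M} {α ε : ℝ}
    (hexp : IsExpansive f α) (hε : ε ≤ α) (p : M) : WsLoc f ε p ⊆ Ws f p := by
  intro y hy
  refine (tendsto_iff_ultrafilter _ _ _).2 fun U hU => ?_
  have hlim : ∀ q, ∃ a, Tendsto (iterZ f · q) U (𝓝 a) := fun q =>
    ⟨_, (U.map (iterZ f · q)).le_nhds_lim⟩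
  obtain ⟨a, ha⟩ := hlim p
  obtain ⟨b, hb⟩ := hlim y
  have hab : a = b := hexp.eq_of_forall_dist_le fun m =>
    (dist_iterZ_le_of_tendsto_of_mem_WsLoc hU hy ha hb m).trans hε
  simpa only [hab, dist_self] using ha.dist hb

theorem mem_SpSet_self (f : M ≃ₜ M) {x p : M} {ν : ℝ} (hp : p ∈ ball x ν) : p ∈ SpSet f x ν p :=
  mem_connectedComponentIn ⟨mem_Ws_self f p, hp⟩

theorem IsExpansive.isOpen_ball_sdiff_SpSet [CompactSpace M] {f : M ≃ₜ M} {α ε ν : ℝ} {x p : M}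
    (hexp : IsExpansive f α) (hε : ε ≤ α) (hS : SpSet f x ν p ⊆ WsLoc f ε p) :
    IsOpen (ball x ν \ SpSet f x ν p) := by
  have hWs : closure (SpSet f x ν p) ⊆ Ws f p :=
    (closure_minimal hS (isClosed_WsLoc f ε p)).trans (hexp.WsLoc_subset_Ws hε p)
  have hclosed : closure (SpSet f x ν p) ∩ ball x ν ⊆ SpSet f x ν p := fun y hy =>
    closure_connectedComponentIn_inter_subset _ _ ⟨hy.1, hWs hy.1, hy.2⟩
  have heq : ball x ν \ SpSet f x ν p = ball x ν \ closure (SpSet f x ν p) :=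
    (sdiff_subset_sdiff_right subset_closure).antisymm' fun y hy =>
      ⟨hy.1, fun hyS => hy.2 (hclosed ⟨hyS, hy.1⟩)⟩
  exact heq ▸ isOpen_ball.sdiff isClosed_closure

theorem PerHr_subset_PerH (f : M ≃ₜ M) {n r : ℕ} (hr : r ≤ n) : PerHr f n r ⊆ PerH f n :=
  subset_biUnion_of_mem (u := PerHr f n) (Finset.mem_coe.2 (Finset.mem_range_succ_iff.2 hr))

end LocalStableSets

theorem stmt12_general {M : Type*} [MetricSpace M] [CompactSpace M] [LocallyConnectedSpace M]
    {f : M ≃ₜ M} {α ε ν : ℝ} (hexp : IsExpansive f α) (hεα : ε ≤ α) {x : M} {C : Set M}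
    (hCν : C ⊆ ball x ν) (hS : ∀ q ∈ C, SpSet f x ν q ⊆ WsLoc f ε q)
    (hchain : ∀ p ∈ C, ∀ q ∈ C,
      ShatSet f x ν p ⊆ ShatSet f x ν q ∨ ShatSet f x ν q ⊆ ShatSet f x ν p)
    (hxC : x ∈ closure C) :
    frontier (⋃ q ∈ C, ShatSet f x ν q) ∩ ball x ν ⊆ WsLoc f ε x := by
  rintro z ⟨hz, hzν⟩
  have hxz : (x, z) ∈ closure {w : M × M | w.1 ∈ C ∧ w.2 ∈ SpSet f x ν w.1} :=
    mk_mem_closure_of_mem_frontier_biUnion_umbrella isOpen_ball hCν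
      (fun q hq => mem_SpSet_self f (hCν hq))
      (fun q hq => hexp.isOpen_ball_sdiff_SpSet hεα (hS q hq)) hchain hxC hzν hz
  exact closure_minimal (fun w hw => hS w.1 hw.1 hw.2) (isClosed_setOfPred_mem_WsLoc f ε) hxz

/-- **Lemma.** The frontier of the union of the umbrellas `Ŝ_q` over a maximal chain
accumulating at `x`, intersected with `B_ν(x)`, lies in `W^s_ε(x)`. -/
theorem stmt12
    {M : Type*} [MetricSpace M] [CompactSpace M] [ConnectedSpace M]
    (n : ℕ) [ChartedSpace (EuclideanSpace ℝ (Fin n)) M]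
    (f : M ≃ₜ M) (α : ℝ) (hα : 0 < α) (hexp : IsExpansive f α)
    (x : M) (hx : ¬ AdmitsLPS f n x)
    (ε : ℝ) (hε : 0 < ε) (hεα : 2 * ε < α) (ν : ℝ) (hν : 0 < ν)
    (hi : ∀ p ∈ PerH f n ∩ Metric.ball x ν,
      SpSet f x ν p ⊆ WsLoc f ε p ∧ UpSet f x ν p ⊆ WuLoc f ε p)
    (hii : ∀ p ∈ PerHr f n (n - 1) ∩ Metric.ball x ν,
      ∃ V₁ V₂ : Set M, TwoComponents (Metric.ball x ν \ SpSet f x ν p) V₁ V₂)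
    (δ : ℝ) (hδ : δ ∈ Set.Ioo (0 : ℝ) ν)
    (C : Set M) (hC : IsMaxChainIn f n x ν δ C) (hxC : x ∈ closure C) :
    frontier (⋃ q ∈ C, ShatSet f x ν q) ∩ Metric.ball x ν ⊆ WsLoc f ε x := by
  have : LocallyConnectedSpace M :=
    ChartedSpace.locallyConnectedSpace (EuclideanSpace ℝ (Fin n)) M
  have hCν : C ⊆ ball x ν := fun q hq => ball_subset_ball hδ.2.le (hC.1.1 hq).2
  exact stmt12_general hexp (by linarith) hCν
    (fun q hq => (hi q ⟨PerHr_subset_PerH f (n.sub_le 1) (hC.1.1 hq).1, hCν hq⟩).1) hC.1.2 hxC
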